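/- Lower bound on the mean-based revenue of the truncated equal revenue curve (Theorem: MBRev(D_ERC(H)) ≥ Ω(log log H)): there exist a constant c > 0 and a threshold H_0 > 1 such that for every real H ≥ H_0, S(H) ≥ c·log(log H). -/

import Mathlib

/-!
The curve `x v = log v / log H` already achieves the bound. With `t = log v` and `w = v * exp (-u)`,
the gap `x v - (1 - w / v) * x w` equals `(u + exp (-u) * (t - u)) / log H`, which is at least
`log t / (2 * log H)`: either `u ≥ log t / 2`, or `t * exp (-u) = exp (log t - u) ≥ log t / 2`
(`gap_bound`). For `v ≥ exp (sqrt (log H))` this is at least `log (log H) / (4 * log H)`, and the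
measure `dv / v` of `[exp (sqrt (log H)), H]` is at least `log H / 2` once `log H ≥ 4`. The revenue
is therefore at least `log (log H) / 8`.

Since `innerSup x` is itself monotone when `x ≥ 0` (`innerSup_monotoneOn`), the integrand is
integrable; and the set of revenues is bounded by `H - 1` (`revenue_bddAbove`), so both the Bochner
integral and `sSup` in `S` take their genuine values.
-/

open MeasureTheory

/-- The "best response" benchmark: `sup_{w ∈ [1,v)} (1 - w/v) * x w`
(with the supremum of the empty set taken to be `0`, the `Real.sSup`
convention). -/
noncomputable def innerSup (x : ℝ → ℝ) (v : ℝ) : ℝ :=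
  sSup ((fun w => (1 - w / v) * x w) '' Set.Ico 1 v)

/-- The mean-based revenue of the equal revenue curve truncated at `H`
(continuous form): the supremum over nondecreasing `x : [1,H] → [0,1]` of
`∫_1^H (1/v) * (x v - sup_{w∈[1,v)} (1 - w/v) * x w) dv`. -/
noncomputable def S (H : ℝ) : ℝ :=
  sSup { r : ℝ | ∃ x : ℝ → ℝ, MonotoneOn x (Set.Icc 1 H) ∧
    (∀ v ∈ Set.Icc (1:ℝ) H, x v ∈ Set.Icc (0:ℝ) 1) ∧
    r = ∫ v in Set.Icc (1:ℝ) H, (1 / v) * (x v - innerSup x v) }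


lemma innerSup_nonneg {x : ℝ → ℝ} {v H : ℝ} (hv : v ∈ Set.Icc 1 H)
    (hx : ∀ w ∈ Set.Icc (1:ℝ) H, 0 ≤ x w) : 0 ≤ innerSup x v := by
  apply Real.sSup_nonneg
  rintro _ ⟨w, hw, rfl⟩
  have hv0 : 0 < v := by linarith [hv.1]
  have : w / v ≤ 1 := (div_le_one hv0).2 hw.2.le
  exact mul_nonneg (by linarith) (hx w ⟨hw.1, hw.2.le.trans hv.2⟩)

lemma innerSup_image_bddAbove {x : ℝ → ℝ} {v H : ℝ} (hv : v ∈ Set.Icc 1 H)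
    (hx : ∀ w ∈ Set.Icc (1:ℝ) H, x w ∈ Set.Icc (0:ℝ) 1) :
    BddAbove ((fun w => (1 - w / v) * x w) '' Set.Ico 1 v) := by
  refine ⟨1, ?_⟩
  rintro _ ⟨w, hw, rfl⟩
  have hv0 : 0 < v := by linarith [hv.1]
  have h1 : w / v ≤ 1 := (div_le_one hv0).2 hw.2.le
  have h0 : 0 ≤ w / v := div_nonneg (by linarith [hw.1]) hv0.le
  have h2 := hx w ⟨hw.1, hw.2.le.trans hv.2⟩
  exact mul_le_one₀ (by linarith) h2.1 h2.2

lemma innerSup_monotoneOn {x : ℝ → ℝ} {H : ℝ}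
    (hx : ∀ w ∈ Set.Icc (1:ℝ) H, x w ∈ Set.Icc (0:ℝ) 1) :
    MonotoneOn (innerSup x) (Set.Icc 1 H) := by
  intro v hv v' hv' hvv
  refine Real.sSup_le ?_ (innerSup_nonneg hv' fun w hw => (hx w hw).1)
  rintro _ ⟨w, hw, rfl⟩
  have hv0 : 0 < v := by linarith [hv.1]
  refine le_trans ?_ (le_csSup (innerSup_image_bddAbove hv' hx)
    ⟨w, ⟨hw.1, hw.2.trans_le hvv⟩, rfl⟩)
  have h2 := hx w ⟨hw.1, hw.2.le.trans hv.2⟩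
  have : w / v' ≤ w / v := div_le_div_of_nonneg_left (by linarith [hw.1]) hv0 hvv
  exact mul_le_mul_of_nonneg_right (by linarith) h2.1

lemma integrand_integrableOn {x : ℝ → ℝ} {H : ℝ} (hm : MonotoneOn x (Set.Icc 1 H))
    (hx : ∀ w ∈ Set.Icc (1:ℝ) H, x w ∈ Set.Icc (0:ℝ) 1) :
    IntegrableOn (fun v => (1 / v) * (x v - innerSup x v)) (Set.Icc 1 H) := by
  have h1 := hm.integrableOn_isCompact (μ := volume) isCompact_Icc
  have h2 := (innerSup_monotoneOn hx).integrableOn_isCompact (μ := volume) isCompact_Icc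
  refine IntegrableOn.continuousOn_mul ?_ (h1.sub h2) isCompact_Icc
  exact continuousOn_const.div continuousOn_id fun v hv => by
    have : (1:ℝ) ≤ v := hv.1
    exact (zero_lt_one.trans_le this).ne'

lemma revenue_bddAbove {H : ℝ} (hH : 1 ≤ H) :
    BddAbove { r : ℝ | ∃ x : ℝ → ℝ, MonotoneOn x (Set.Icc 1 H) ∧
    (∀ v ∈ Set.Icc (1:ℝ) H, x v ∈ Set.Icc (0:ℝ) 1) ∧
    r = ∫ v in Set.Icc (1:ℝ) H, (1 / v) * (x v - innerSup x v) } := by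
  refine ⟨H - 1, ?_⟩
  rintro _ ⟨x, hm, hx, rfl⟩
  have h : ∫ v in Set.Icc (1:ℝ) H, (1 / v) * (x v - innerSup x v)
      ≤ ∫ v in Set.Icc (1:ℝ) H, (1:ℝ) := by
    refine setIntegral_mono_on (integrand_integrableOn hm hx) (by simp) measurableSet_Icc ?_
    intro v hv
    have h1 := innerSup_nonneg hv fun w hw => (hx w hw).1
    have h2 := (hx v hv).2
    have hv0 : 0 < v := by linarith [hv.1]
    rw [one_div_mul_eq_div, div_le_one hv0]
    linarith [hv.1]
  simpa [hH] using h

/-- With `t = log v` and `w = v * exp (-u)`, this bounds `(1 - w / v) * log w` away from `log v`. -/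
lemma gap_bound {t u : ℝ} (ht : 0 < t) (hu : 0 ≤ u) (hut : u ≤ t) :
    (1 - Real.exp (-u)) * (t - u) ≤ t - Real.log t / 2 := by
  have h1 : Real.exp (-u) ≤ 1 := Real.exp_le_one_iff.2 (by linarith)
  have h0 := Real.exp_pos (-u)
  rcases le_total (Real.log t / 2) u with h | h
  · nlinarith
  · have h2 : t * Real.exp (-u) = Real.exp (Real.log t - u) := by
      rw [sub_eq_add_neg, Real.exp_add, Real.exp_log ht]
    have h3 := Real.add_one_le_exp (Real.log t - u)
    nlinarith

lemma innerSup_log_le {T v : ℝ} (hT : 0 < T) (hv : 1 < v) :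
    innerSup (fun w => Real.log w / T) v ≤ (Real.log v - Real.log (Real.log v) / 2) / T := by
  have hv0 : 0 < v := by linarith
  have ht := Real.log_pos hv
  refine csSup_le ((Set.nonempty_Ico.2 hv).image _) ?_
  rintro _ ⟨w, hw, rfl⟩
  have hw0 : 0 < w := by linarith [hw.1]
  have h := gap_bound (u := Real.log v - Real.log w) ht
    (sub_nonneg.2 (Real.log_le_log hw0 hw.2.le)) (by linarith [Real.log_nonneg hw.1])
  rw [neg_sub, Real.exp_sub, Real.exp_log hw0, Real.exp_log hv0, sub_sub_cancel] at h
  refine (mul_div_assoc _ _ _).symm.trans_le ?_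
  exact div_le_div_of_nonneg_right h hT.le

lemma innerSup_log_le_self {T v : ℝ} (hT : 0 < T) (hv : 1 ≤ v) :
    innerSup (fun w => Real.log w / T) v ≤ Real.log v / T := by
  refine Real.sSup_le ?_ (div_nonneg (Real.log_nonneg hv) hT.le)
  rintro _ ⟨w, hw, rfl⟩
  have hv0 : 0 < v := by linarith
  have hw0 : 0 < w := by linarith [hw.1]
  have h1 : Real.log w / T ≤ Real.log v / T :=
    div_le_div_of_nonneg_right (Real.log_le_log hw0 hw.2.le) hT.le
  have h2 : 0 ≤ Real.log w / T := div_nonneg (Real.log_nonneg hw.1) hT.le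
  have h3 : 0 ≤ w / v := by positivity
  nlinarith

/-- Lower bound on the mean-based revenue of the truncated equal revenue
curve: `S H ≥ Ω(log log H)`. -/
theorem S_ge_log_log : ∃ c : ℝ, 0 < c ∧ ∃ H₀ : ℝ, 1 < H₀ ∧
    ∀ H : ℝ, H₀ ≤ H → c * Real.log (Real.log H) ≤ S H := by
  refine ⟨1 / 8, by norm_num, Real.exp 4, by simp, fun H hH => ?_⟩
  have hH0 : 0 < H := (Real.exp_pos 4).trans_le hH
  have hT4 : 4 ≤ Real.log H := (Real.le_log_iff_exp_le hH0).2 hH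
  have hH1 : 1 ≤ H := le_trans (by simp) hH
  obtain ⟨T, hT⟩ : ∃ T, T = Real.log H := ⟨_, rfl⟩
  rw [← hT] at hT4 ⊢
  have hT0 : 0 < T := by linarith
  have hm : MonotoneOn (fun w => Real.log w / T) (Set.Icc 1 H) := fun v hv v' _ h =>
    div_le_div_of_nonneg_right (Real.log_le_log (by linarith [hv.1]) h) hT0.le
  have hx : ∀ v ∈ Set.Icc (1:ℝ) H, Real.log v / T ∈ Set.Icc (0:ℝ) 1 := fun v hv =>
    ⟨div_nonneg (Real.log_nonneg hv.1) hT0.le, (div_le_one hT0).2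
      (hT ▸ Real.log_le_log (by linarith [hv.1]) hv.2)⟩
  refine le_trans ?_ (le_csSup (revenue_bddAbove hH1) ⟨_, hm, hx, rfl⟩)
  have hI := integrand_integrableOn hm hx
  have hs2 : 2 ≤ √T := Real.le_sqrt_of_sq_le (by linarith)
  have hsq : √T * √T = T := Real.mul_self_sqrt hT0.le
  have ha1 : 1 < Real.exp √T := Real.one_lt_exp_iff.2 (by linarith)
  have haH : Real.exp √T ≤ H := by
    rw [← Real.le_log_iff_exp_le hH0, ← hT]
    nlinarith
  have hsub : Set.Icc (Real.exp √T) H ⊆ Set.Icc 1 H := Set.Icc_subset_Icc_left ha1.le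
  have hlogT : 0 ≤ Real.log T := Real.log_nonneg (by linarith)
  have hval : ∫ v in Set.Icc (Real.exp √T) H, (1 / v) * (Real.log T / (4 * T))
      = (T - √T) * (Real.log T / (4 * T)) := by
    rw [integral_mul_const, integral_Icc_eq_integral_Ioc,
      ← intervalIntegral.integral_of_le haH,
      integral_one_div_of_pos (by linarith) hH0, Real.log_div hH0.ne' (by linarith),
      Real.log_exp, hT]
  calc 1 / 8 * Real.log T
      = (T / 2) * (Real.log T / (4 * T)) := by field_simp; ring
    _ ≤ (T - √T) * (Real.log T / (4 * T)) :=
        mul_le_mul_of_nonneg_right (by nlinarith) (by positivity)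
    _ = ∫ v in Set.Icc (Real.exp √T) H, (1 / v) * (Real.log T / (4 * T)) := hval.symm
    _ ≤ ∫ v in Set.Icc (Real.exp √T) H,
          (1 / v) * (Real.log v / T - innerSup (fun w => Real.log w / T) v) := by
        refine setIntegral_mono_on ?_ (hI.mono_set hsub) measurableSet_Icc ?_
        · refine ContinuousOn.integrableOn_Icc (ContinuousOn.mul ?_ continuousOn_const)
          exact continuousOn_const.div continuousOn_id fun v hv => by
            have : 1 ≤ v := (hsub hv).1
            exact (zero_lt_one.trans_le this).ne'
        · intro v hv
          have hv1 : 1 < v := ha1.trans_le hv.1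
          have h1 := innerSup_log_le hT0 hv1
          have h2 : √T ≤ Real.log v := (Real.le_log_iff_exp_le (by linarith)).2 hv.1
          have h3 : Real.log T / 2 ≤ Real.log (Real.log v) := by
            rw [← Real.log_sqrt hT0.le]
            exact Real.log_le_log (by linarith) h2
          refine mul_le_mul_of_nonneg_left (le_trans ?_ (sub_le_sub_left h1 _))
            (one_div_nonneg.2 (by linarith))
          rw [← sub_div, sub_sub_cancel, div_le_div_iff₀ (by linarith) hT0]
          nlinarith
    _ ≤ _ := by
        refine setIntegral_mono_set hI ?_ hsub.eventuallyLE
        refine (ae_restrict_iff' measurableSet_Icc).2 (Filter.Eventually.of_forall fun v hv => ?_)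
        exact mul_nonneg (one_div_nonneg.2 (by linarith [hv.1]))
          (sub_nonneg.2 (innerSup_log_le_self hT0 hv.1))
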